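/- Let H be a non-semisimple unimodular Hopf algebra over k of odd index n and ω ∈ k a primitive n-th root of unity. Then for every l ∈ Z_n, Σ_{(a,i) ∈ Z_2 × Z_n} (−1)^a ω^{−i} · dim H^ω_{a,i,l−2i} = 0 in k, where the index l − 2i is computed in Z_n. -/

import Mathlib

open scoped TensorProduct

/-- A group-like element of a coalgebra: a nonzero element `a` with `Δ a = a ⊗ a`. -/
def IsGroupLike (k : Type*) {H : Type*} [CommSemiring k] [AddCommMonoid H] [Module k H]
    [Coalgebra k H] (a : H) : Prop :=
  a ≠ 0 ∧ Coalgebra.comul (R := k) a = a ⊗ₜ[k] a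

/-- The convolution product on the dual of a coalgebra. -/
noncomputable def conv {k H : Type*} [CommSemiring k] [AddCommMonoid H] [Module k H]
    [Coalgebra k H] (f g : Module.Dual k H) : Module.Dual k H :=
  LinearMap.mul' k k ∘ₗ TensorProduct.map f g ∘ₗ Coalgebra.comul

/-- `l ∈ H*` is a right integral of `H*`: `l * β = β(1) • l` for the convolution product. -/
def IsRightIntegralDual (k : Type*) {H : Type*} [CommSemiring k] [Semiring H]
    [HopfAlgebra k H] (l : Module.Dual k H) : Prop :=
  ∀ f : Module.Dual k H, conv l f = f 1 • l

/-- `Λ ∈ H` is a left integral of `H`: `a * Λ = ε(a) • Λ` for all `a`. -/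
def IsLeftIntegral (k : Type*) {H : Type*} [CommSemiring k] [Semiring H]
    [HopfAlgebra k H] (L : H) : Prop :=
  ∀ a : H, a * L = Coalgebra.counit (R := k) a • L

/-- `Λ ∈ H` is a right integral of `H`: `Λ * a = ε(a) • Λ` for all `a`. -/
def IsRightIntegral (k : Type*) {H : Type*} [CommSemiring k] [Semiring H]
    [HopfAlgebra k H] (L : H) : Prop :=
  ∀ a : H, L * a = Coalgebra.counit (R := k) a • L

/-- `g` is the distinguished group-like element of `H`: it is group-like and
`β * λ = β(g) • λ` for some nonzero right integral `λ` of `H*`. -/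
def IsDistinguishedGroupLike (k : Type*) {H : Type*} [CommSemiring k] [Semiring H]
    [HopfAlgebra k H] (g : H) : Prop :=
  IsGroupLike k g ∧ ∃ l : Module.Dual k H, l ≠ 0 ∧ IsRightIntegralDual k l ∧
    ∀ f : Module.Dual k H, conv f l = f g • l

/-- `α` is the distinguished group-like element of `H*`: an algebra map `H → k` with
`Λ * a = α(a) • Λ` for some nonzero left integral `Λ` of `H`. -/
def IsDistinguishedGroupLikeDual (k : Type*) {H : Type*} [CommSemiring k] [Semiring H]
    [HopfAlgebra k H] (α : H →ₐ[k] k) : Prop :=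
  ∃ L : H, L ≠ 0 ∧ IsLeftIntegral k L ∧ ∀ a : H, L * a = α a • L

/-- `IsHopfIndex k g n` : `n` is the index of the Hopf algebra `H` with distinguished
group-like element `g`, i.e. the smallest positive integer `n` with `S ^ (4 n) = id` and
`g ^ n = 1`, where `S` is the antipode. -/
def IsHopfIndex (k : Type*) {H : Type*} [CommSemiring k] [Semiring H] [HopfAlgebra k H]
    (g : H) (n : ℕ) : Prop :=
  0 < n ∧ (HopfAlgebra.antipode (R := k) (A := H) : Module.End k H) ^ (4 * n) = 1 ∧ g ^ n = 1 ∧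
    ∀ m : ℕ, 0 < m → (HopfAlgebra.antipode (R := k) (A := H) : Module.End k H) ^ (4 * m) = 1 →
      g ^ m = 1 → n ≤ m

/-- The simultaneous eigenspace `H^ω_{a,i,j} = {u ∈ H | S² u = (-1)^a ω^i • u, u * g = ω^j • u}`
for `(a,i,j) ∈ ℤ/2 × ℤ/n × ℤ/n`. -/
noncomputable def hopfEigenspace {k H : Type*} [CommRing k] [Ring H] [HopfAlgebra k H]
    (g : H) (ω : k) {n : ℕ} (t : ZMod 2 × ZMod n × ZMod n) : Submodule k H :=
  Module.End.eigenspace ((HopfAlgebra.antipode (R := k) (A := H) : Module.End k H) ^ 2)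
      ((-1 : k) ^ t.1.val * ω ^ t.2.1.val) ⊓
    Module.End.eigenspace (LinearMap.mulRight k g : Module.End k H) (ω ^ t.2.2.val)

/-- Convolution powers of an element of the dual; the zeroth power is the counit,
the unit of the convolution algebra. -/
noncomputable def convPow {k H : Type*} [CommSemiring k] [AddCommMonoid H] [Module k H]
    [Coalgebra k H] (f : Module.Dual k H) : ℕ → Module.Dual k H
  | 0 => Coalgebra.counit
  | m + 1 => conv f (convPow f m)


open Coalgebra HopfAlgebra

section Contractions

variable {k H : Type*} [CommSemiring k] [AddCommMonoid H] [Module k H]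

/-- The contraction `a ⊗ b ↦ l(a) • b` of the left tensor factor. -/
noncomputable def contractFst (l : Module.Dual k H) : H ⊗[k] H →ₗ[k] H :=
  (TensorProduct.lid k H).toLinearMap ∘ₗ l.rTensor H

/-- The contraction `a ⊗ b ↦ l(b) • a` of the right tensor factor. -/
noncomputable def contractSnd (l : Module.Dual k H) : H ⊗[k] H →ₗ[k] H :=
  (TensorProduct.rid k H).toLinearMap ∘ₗ l.lTensor H

@[simp]
lemma contractFst_tmul (l : Module.Dual k H) (a b : H) :
    contractFst l (a ⊗ₜ[k] b) = l a • b := by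
  simp [contractFst]

@[simp]
lemma contractSnd_tmul (l : Module.Dual k H) (a b : H) :
    contractSnd l (a ⊗ₜ[k] b) = l b • a := by
  simp [contractSnd]

lemma dual_contractFst [Coalgebra k H] (l f : Module.Dual k H) (x : H) :
    f (contractFst l (comul x)) = conv l f x := by
  simp only [conv, LinearMap.comp_apply]
  induction comul (R := k) x with
  | zero => simp
  | tmul a b => simp
  | add a b ha hb => simp [ha, hb]

lemma dual_contractSnd [Coalgebra k H] (l f : Module.Dual k H) (x : H) :
    f (contractSnd l (comul x)) = conv f l x := by
  simp only [conv, LinearMap.comp_apply]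
  induction comul (R := k) x with
  | zero => simp
  | tmul a b => simp [mul_comm]
  | add a b ha hb => simp [ha, hb]

end Contractions

section Integrals

variable {k H : Type*} [Field k] [Ring H] [HopfAlgebra k H]

lemma contractFst_comul_of_isRightIntegralDual {l : Module.Dual k H}
    (hl : IsRightIntegralDual k l) (x : H) : contractFst l (comul x) = l x • 1 := by
  rw [← sub_eq_zero, ← Module.forall_dual_apply_eq_zero_iff k]
  intro f
  simp [dual_contractFst, hl f, mul_comm]

lemma contractSnd_comul_of_conv_eq_smul {l : Module.Dual k H} {g : H}
    (hl : ∀ f : Module.Dual k H, conv f l = f g • l) (x : H) :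
    contractSnd l (comul x) = l x • g := by
  rw [← sub_eq_zero, ← Module.forall_dual_apply_eq_zero_iff k]
  intro f
  simp [dual_contractSnd, hl f, mul_comm]

lemma contractFst_mul_one_tmul (l : Module.Dual k H) (z : H ⊗[k] H) (w : H) :
    contractFst l (z * 1 ⊗ₜ w) = contractFst l z * w := by
  induction z with
  | zero => simp
  | tmul a b => simp
  | add a b ha hb => simp [add_mul, ha, hb]

lemma contractSnd_mul_tmul_one (l : Module.Dual k H) (z : H ⊗[k] H) (w : H) :
    contractSnd l (z * w ⊗ₜ 1) = contractSnd l z * w := by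
  induction z with
  | zero => simp
  | tmul a b => simp
  | add a b ha hb => simp [add_mul, ha, hb]

lemma contractFst_mul_leftIntegral_tmul (l : Module.Dual k H) {L : H} (hL : IsLeftIntegral k L)
    (x : H) : contractFst l (comul x * L ⊗ₜ 1) = l L • x := by
  have key : ∀ z : H ⊗[k] H, contractFst l (z * L ⊗ₜ 1) = l L • contractFst counit z := by
    intro z
    induction z with
    | zero => simp
    | tmul a b => simp [hL a, smul_smul, mul_comm]
    | add a b ha hb => simp [add_mul, ha, hb]
  rw [key]
  simp [contractFst]

lemma contractSnd_mul_tmul_leftIntegral (l : Module.Dual k H) {L : H} (hL : IsLeftIntegral k L)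
    (x : H) : contractSnd l (comul x * 1 ⊗ₜ L) = l L • x := by
  have key : ∀ z : H ⊗[k] H, contractSnd l (z * 1 ⊗ₜ L) = l L • contractSnd counit z := by
    intro z
    induction z with
    | zero => simp
    | tmul a b => simp [hL b, smul_smul, mul_comm]
    | add a b ha hb => simp [add_mul, ha, hb]
  rw [key]
  simp [contractSnd]

variable {ι : Type*}

lemma lTensor_assoc_comul_of_comp_comul {F : H ⊗[k] H →ₗ[k] H}
    (hF : F ∘ₗ comul = Algebra.linearMap k H ∘ₗ counit) (y : H) :
    F.lTensor H (TensorProduct.assoc k H H H (comul.rTensor H (comul y))) = y ⊗ₜ[k] 1 := by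
  rw [coassoc_apply, ← LinearMap.lTensor_comp_apply, hF, LinearMap.lTensor_comp_apply,
    lTensor_counit_comul]
  simp

lemma rTensor_assoc_symm_comul_of_comp_comul {F : H ⊗[k] H →ₗ[k] H}
    (hF : F ∘ₗ comul = Algebra.linearMap k H ∘ₗ counit) (y : H) :
    F.rTensor H ((TensorProduct.assoc k H H H).symm (comul.lTensor H (comul y))) =
      1 ⊗ₜ[k] y := by
  rw [coassoc_symm_apply, ← LinearMap.rTensor_comp_apply, hF, LinearMap.rTensor_comp_apply,
    rTensor_counit_comul]
  simp

lemma sum_comul_mul_one_tmul_antipode {y : H} (r : Repr k y ι) :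
    ∑ i ∈ r.index, comul (R := k) (r.left i) * 1 ⊗ₜ antipode k (r.right i) = y ⊗ₜ[k] 1 := by
  have key : ∀ (z : H ⊗[k] H) (b : H),
      (LinearMap.mul' k H ∘ₗ (antipode k).lTensor H).lTensor H
        (TensorProduct.assoc k H H H (z ⊗ₜ b)) = z * 1 ⊗ₜ antipode k b := by
    intro z b
    induction z with
    | zero => simp
    | tmul a b => simp
    | add a b ha hb => simp [add_mul, TensorProduct.add_tmul, ha, hb]
  have h := lTensor_assoc_comul_of_comp_comul (k := k) (H := H)
    (F := LinearMap.mul' k H ∘ₗ (antipode k).lTensor H) mul_antipode_lTensor_comul y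
  rw [← r.eq] at h
  simpa only [map_sum, LinearMap.rTensor_tmul, key] using h

variable {T : H →ₗ[k] H}

lemma mul_inv_antipode_rev (hST : ∀ x, antipode k (T x) = x) (hTS : ∀ x, T (antipode k x) = x)
    (a b : H) : T (a * b) = T b * T a := by
  rw [← hTS (T b * T a), antipode_mul_antidistrib, hST, hST]

lemma sum_inv_antipode_right_mul_left (hST : ∀ x, antipode k (T x) = x)
    (hTS : ∀ x, T (antipode k x) = x) {y : H} (r : Repr k y ι) :
    ∑ i ∈ r.index, T (r.right i) * r.left i = counit (R := k) y • 1 := by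
  have h := congr(T $(sum_antipode_mul_eq_smul r))
  have h1 : T 1 = 1 := by simpa using hTS 1
  simpa [mul_inv_antipode_rev hST hTS, hTS, h1] using h

lemma sum_right_mul_inv_antipode_left (hST : ∀ x, antipode k (T x) = x)
    (hTS : ∀ x, T (antipode k x) = x) {y : H} (r : Repr k y ι) :
    ∑ i ∈ r.index, r.right i * T (r.left i) = counit (R := k) y • 1 := by
  have h := congr(T $(sum_mul_antipode_eq_smul r))
  have h1 : T 1 = 1 := by simpa using hTS 1
  simpa [mul_inv_antipode_rev hST hTS, hTS, h1] using h

lemma sum_comul_mul_inv_antipode_tmul_one (hST : ∀ x, antipode k (T x) = x)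
    (hTS : ∀ x, T (antipode k x) = x) {y : H} (r : Repr k y ι) :
    ∑ i ∈ r.index, comul (R := k) (r.right i) * T (r.left i) ⊗ₜ 1 = 1 ⊗ₜ[k] y := by
  let F : H ⊗[k] H →ₗ[k] H :=
    LinearMap.mul' k H ∘ₗ (TensorProduct.comm k H H).toLinearMap ∘ₗ T.rTensor H
  have hF : F ∘ₗ comul = Algebra.linearMap k H ∘ₗ counit := by
    ext x
    have := sum_right_mul_inv_antipode_left hST hTS (ℛ k x)
    simp [← (ℛ k x).eq, F, this, Algebra.algebraMap_eq_smul_one]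
  have key : ∀ (z : H ⊗[k] H) (b : H),
      F.rTensor H ((TensorProduct.assoc k H H H).symm (b ⊗ₜ z)) = z * T b ⊗ₜ 1 := by
    intro z b
    induction z with
    | zero => simp
    | tmul a b => simp [F]
    | add a b ha hb => simp [add_mul, TensorProduct.tmul_add, ha, hb]
  have h := rTensor_assoc_symm_comul_of_comp_comul hF y
  rw [← r.eq] at h
  simpa only [map_sum, LinearMap.lTensor_tmul, key] using h

lemma sum_one_tmul_inv_antipode_mul_comul (hST : ∀ x, antipode k (T x) = x)
    (hTS : ∀ x, T (antipode k x) = x) {y : H} (r : Repr k y ι) :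
    ∑ i ∈ r.index, 1 ⊗ₜ T (r.right i) * comul (R := k) (r.left i) = y ⊗ₜ[k] 1 := by
  let F : H ⊗[k] H →ₗ[k] H :=
    LinearMap.mul' k H ∘ₗ (TensorProduct.comm k H H).toLinearMap ∘ₗ T.lTensor H
  have hF : F ∘ₗ comul = Algebra.linearMap k H ∘ₗ counit := by
    ext x
    have := sum_inv_antipode_right_mul_left hST hTS (ℛ k x)
    simp [← (ℛ k x).eq, F, this, Algebra.algebraMap_eq_smul_one]
  have key : ∀ (z : H ⊗[k] H) (b : H),
      F.lTensor H (TensorProduct.assoc k H H H (z ⊗ₜ b)) = 1 ⊗ₜ T b * z := by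
    intro z b
    induction z with
    | zero => simp
    | tmul a b => simp [F]
    | add a b ha hb => simp [mul_add, TensorProduct.add_tmul, ha, hb]
  have h := lTensor_assoc_comul_of_comp_comul hF y
  rw [← r.eq] at h
  simpa only [map_sum, LinearMap.rTensor_tmul, key] using h

lemma contractFst_comul_mul_tmul_one {l : Module.Dual k H} (hl : IsRightIntegralDual k l)
    (x : H) {y : H} (r : Repr k y ι) :
    contractFst l (comul x * y ⊗ₜ 1) =
      ∑ i ∈ r.index, l (x * r.left i) • antipode k (r.right i) := by
  rw [← sum_comul_mul_one_tmul_antipode r, Finset.mul_sum, map_sum]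
  refine Finset.sum_congr rfl fun i _ => ?_
  rw [← mul_assoc, ← Bialgebra.comul_mul, contractFst_mul_one_tmul,
    contractFst_comul_of_isRightIntegralDual hl, smul_one_mul]

lemma contractSnd_comul_mul_one_tmul (hST : ∀ x, antipode k (T x) = x)
    (hTS : ∀ x, T (antipode k x) = x) {l : Module.Dual k H} {g : H}
    (hl : ∀ f : Module.Dual k H, conv f l = f g • l) (x : H) {y : H} (r : Repr k y ι) :
    contractSnd l (comul x * 1 ⊗ₜ y) =
      ∑ i ∈ r.index, l (x * r.right i) • (g * T (r.left i)) := by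
  rw [← sum_comul_mul_inv_antipode_tmul_one hST hTS r, Finset.mul_sum, map_sum]
  refine Finset.sum_congr rfl fun i _ => ?_
  rw [← mul_assoc, ← Bialgebra.comul_mul, contractSnd_mul_tmul_one,
    contractSnd_comul_of_conv_eq_smul hl, smul_mul_assoc]

/-- Every element of the left radical of a right integral of the dual has a coproduct whose left
legs lie in that radical. -/
lemma exists_repr_left_mem_radical (hTS : ∀ x, T (antipode k x) = x)
    {l : Module.Dual k H} (hl : IsRightIntegralDual k l) {y : H} (hy : ∀ x, l (x * y) = 0) :
    ∃ r : Repr k y (Module.Free.ChooseBasisIndex k H), ∀ i x, l (x * r.left i) = 0 := by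
  classical
  let b := Module.Free.chooseBasis k H
  obtain ⟨a, ha⟩ := TensorProduct.eq_repr_basis_right b (comul (R := k) y)
  let r : Repr k y (Module.Free.ChooseBasisIndex k H) := ⟨a.support, a, b, ha⟩
  refine ⟨r, fun i x => ?_⟩
  have h0 : contractFst l (comul x * y ⊗ₜ 1) = 0 := by
    induction comul (R := k) x with
    | zero => simp
    | tmul a b => simp [hy]
    | add a b ha hb => simp [add_mul, ha, hb]
  have h := congr(T $(h0.symm.trans (contractFst_comul_mul_tmul_one hl x r)))
  simp only [map_zero, map_sum, map_smul, hTS] at h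
  by_cases hi : i ∈ a.support
  · exact linearIndependent_iff'.1 b.linearIndependent a.support _ h.symm i hi
  · simp [r, Finsupp.notMem_support_iff.1 hi]

/-- A nonzero right integral of the dual is nondegenerate. -/
lemma eq_zero_of_forall_mul_eq_zero (hST : ∀ x, antipode k (T x) = x)
    (hTS : ∀ x, T (antipode k x) = x) {l : Module.Dual k H} (hl0 : l ≠ 0)
    (hl : IsRightIntegralDual k l) {y : H} (hy : ∀ x, l (x * y) = 0) : y = 0 := by
  have hε : ∀ y : H, (∀ x, l (x * y) = 0) → counit (R := k) y = 0 := by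
    intro y hy
    obtain ⟨r, hr⟩ := exists_repr_left_mem_radical hTS hl hy
    by_contra hne
    refine hl0 (LinearMap.ext fun z => ?_)
    have h := congr(l (z * $(sum_inv_antipode_right_mul_left hST hTS r)))
    simp only [Finset.mul_sum, ← mul_assoc, map_sum, hr, Finset.sum_const_zero] at h
    simpa [hne] using h.symm
  obtain ⟨r, hr⟩ := exists_repr_left_mem_radical hTS hl hy
  rw [← sum_counit_smul r]
  exact Finset.sum_eq_zero fun i _ => by rw [hε _ (hr i), zero_smul]

lemma dual_integral_apply_integral_ne_zero (hST : ∀ x, antipode k (T x) = x)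
    (hTS : ∀ x, T (antipode k x) = x) {l : Module.Dual k H} (hl0 : l ≠ 0)
    (hl : IsRightIntegralDual k l) {L : H} (hL0 : L ≠ 0) (hL : IsLeftIntegral k L) :
    l L ≠ 0 :=
  fun h => hL0 <| eq_zero_of_forall_mul_eq_zero hST hTS hl0 hl fun x => by simp [hL x, h]

lemma sum_dual_mul_left_smul_antipode_right {l : Module.Dual k H}
    (hl : IsRightIntegralDual k l) {L : H} (hL : IsLeftIntegral k L) (r : Repr k L ι) (x : H) :
    ∑ i ∈ r.index, l (x * r.left i) • antipode k (r.right i) = l L • x := by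
  rw [← contractFst_comul_mul_tmul_one hl, contractFst_mul_leftIntegral_tmul l hL]

lemma sum_dual_mul_right_smul_left (hST : ∀ x, antipode k (T x) = x)
    (hTS : ∀ x, T (antipode k x) = x) {l : Module.Dual k H} {g : H}
    (hl : ∀ f : Module.Dual k H, conv f l = f g • l) {L : H} (hL : IsLeftIntegral k L)
    (r : Repr k L ι) (x : H) :
    ∑ i ∈ r.index, l (x * r.right i) • (g * T (r.left i)) = l L • x := by
  rw [← contractSnd_comul_mul_one_tmul hST hTS hl, contractSnd_mul_tmul_leftIntegral l hL]

lemma sum_dual_left_mul_smul_right {l : Module.Dual k H}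
    (hl : IsRightIntegralDual k l) {L : H} (hL : IsRightIntegral k L) (r : Repr k L ι) (y : H) :
    ∑ i ∈ r.index, l (r.left i * y) • r.right i = l L • antipode k y := by
  have h := contractFst_comul_mul_tmul_one hl L (ℛ k y)
  rw [← r.eq] at h
  simp only [Finset.sum_mul, Algebra.TensorProduct.tmul_mul_tmul, mul_one, map_sum,
    contractFst_tmul, hL _, map_smul, smul_eq_mul] at h
  rw [h]
  conv_rhs => rw [← sum_counit_smul (ℛ k y)]
  simp [Finset.smul_sum, smul_smul, mul_comm]

lemma sum_dual_right_mul_smul_left (hST : ∀ x, antipode k (T x) = x)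
    (hTS : ∀ x, T (antipode k x) = x) {l : Module.Dual k H} {g : H}
    (hl : ∀ f : Module.Dual k H, conv f l = f g • l) {L : H} (hL : IsRightIntegral k L)
    (r : Repr k L ι) (y : H) :
    ∑ i ∈ r.index, l (r.right i * y) • r.left i = l L • (g * T y) := by
  have h := contractSnd_comul_mul_one_tmul hST hTS hl L (ℛ k y)
  rw [← r.eq] at h
  simp only [Finset.sum_mul, Algebra.TensorProduct.tmul_mul_tmul, mul_one, map_sum,
    contractSnd_tmul, hL _, map_smul, smul_eq_mul] at h
  rw [h]
  have hy : ∑ i ∈ (ℛ k y).index, counit (R := k) ((ℛ k y).right i) • (ℛ k y).left i = y := by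
    have hc : contractSnd counit (comul (R := k) y) = y := by simp [contractSnd]
    rw [← (ℛ k y).eq] at hc
    simpa using hc
  conv_rhs => rw [← hy]
  simp [Finset.smul_sum, Finset.mul_sum, smul_smul, mul_comm]

/-- For a unimodular Hopf algebra, `S⁻²` is the Nakayama automorphism of a right integral of the
dual. -/
lemma dual_integral_mul_comm (hST : ∀ x, antipode k (T x) = x)
    (hTS : ∀ x, T (antipode k x) = x) {l : Module.Dual k H} {g g' : H} (hg : g * g' = 1)
    (hl : IsRightIntegralDual k l) (hlg : ∀ f : Module.Dual k H, conv f l = f g • l) {L : H}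
    (hlL : l L ≠ 0) (hL : IsLeftIntegral k L) (hL' : IsRightIntegral k L) (x z : H) :
    l (x * z) = l (z * T (T x)) := by
  have hz : l L • z = ∑ i ∈ (ℛ k L).index,
      l ((ℛ k L).right i * antipode k (g' * z)) • (ℛ k L).left i := by
    rw [sum_dual_right_mul_smul_left hST hTS hlg hL', hTS, ← mul_assoc, hg, one_mul]
  have h₁ : ∑ i ∈ (ℛ k L).index, l (x * (ℛ k L).left i) • (ℛ k L).right i = l L • T x := by
    simpa [hTS] using congr(T $(sum_dual_mul_left_smul_antipode_right hl hL (ℛ k L) x))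
  have h₂ := sum_dual_left_mul_smul_right hl hL' (ℛ k L) (T (T x))
  rw [hST] at h₂
  have h := congr(l ($(h₁.trans h₂.symm) * antipode k (g' * z)))
  simp only [Finset.sum_mul, map_sum, smul_mul_assoc, map_smul, smul_eq_mul] at h
  apply mul_left_cancel₀ hlL
  have hsmul : ∀ w, l L * l w = l (l L • w) := fun w => by rw [map_smul, smul_eq_mul]
  rw [hsmul, hsmul, ← mul_smul_comm, ← smul_mul_assoc, hz]
  simp only [Finset.mul_sum, Finset.sum_mul, map_sum, smul_mul_assoc, mul_smul_comm, map_smul,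
    smul_eq_mul]
  simpa only [mul_comm] using h

/-- Radford's formula for the fourth power of the antipode of a unimodular Hopf algebra. -/
lemma antipode_pow_four_mul (hST : ∀ x, antipode k (T x) = x)
    (hTS : ∀ x, T (antipode k x) = x) {l : Module.Dual k H} {g : H} (hg : IsGroupLikeElem k g)
    (hl : IsRightIntegralDual k l) (hlg : ∀ f : Module.Dual k H, conv f l = f g • l) {L : H}
    (hlL : l L ≠ 0) (hL : IsLeftIntegral k L) (hL' : IsRightIntegral k L) (x : H) :
    ((antipode k : Module.End k H) ^ 4) x * g = g * x := by
  have h : ∀ y : H, l L • y = l L • (g * T (g * T (T (T y)))) := by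
    intro y
    rw [← sum_dual_mul_right_smul_left hST hTS hlg hL (ℛ k L) y, ← mul_smul_comm, ← map_smul,
      ← sum_dual_right_mul_smul_left hST hTS hlg hL' (ℛ k L), map_sum, Finset.mul_sum]
    refine Finset.sum_congr rfl fun i _ => ?_
    rw [dual_integral_mul_comm hST hTS hg.mul_antipode_cancel hl hlg hlL hL hL', map_smul,
      mul_smul_comm]
  have h' := congr(antipode k $(smul_right_injective H hlL
    (h (antipode k (antipode k (antipode k x))))))
  rw [antipode_mul_antidistrib, hST, hTS, hTS, hTS] at h'
  simp only [pow_succ, pow_zero, one_mul, Module.End.mul_apply, h', mul_assoc,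
    hg.antipode_mul_cancel, mul_one]

lemma trace_mulLeft_comp_inv_antipode_sq [FiniteDimensional k H]
    (hST : ∀ x, antipode k (T x) = x) (hTS : ∀ x, T (antipode k x) = x)
    {l : Module.Dual k H} (hl : IsRightIntegralDual k l) {L : H} (hlL : l L ≠ 0)
    (hL : IsLeftIntegral k L) (hεL : counit (R := k) L = 0) (a : H) :
    LinearMap.trace k H (LinearMap.mulLeft k a ∘ₗ T ∘ₗ T) = 0 := by
  have h : l L • (LinearMap.mulLeft k a ∘ₗ T ∘ₗ T) = ∑ i ∈ (ℛ k L).index,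
      (l ∘ₗ LinearMap.mulRight k ((ℛ k L).left i)).smulRight (a * T ((ℛ k L).right i)) := by
    ext x
    have := congr(a * T (T $(sum_dual_mul_left_smul_antipode_right hl hL (ℛ k L) x)))
    simpa [hTS, Finset.mul_sum] using this.symm
  have h' := congr(LinearMap.trace k H $h)
  have hε := congr(l (a * $(sum_inv_antipode_right_mul_left hST hTS (ℛ k L))))
  simp only [map_smul, map_sum, LinearMap.trace_smulRight, LinearMap.comp_apply,
    LinearMap.mulRight_apply] at h'
  simp only [hεL, zero_smul, mul_zero, map_zero, Finset.mul_sum, map_sum, ← mul_assoc] at hε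
  rw [hε] at h'
  exact (smul_eq_zero.1 h').resolve_left hlL

/-- Maschke's theorem: a Hopf algebra with a left integral of nonzero counit is semisimple. -/
lemma isSemisimpleRing_of_counit_integral_ne_zero (hST : ∀ x, antipode k (T x) = x)
    (hTS : ∀ x, T (antipode k x) = x) {L : H} (hL : IsLeftIntegral k L)
    (hεL : counit (R := k) L ≠ 0) : IsSemisimpleRing H := by
  have hcas : ∀ h : H, h ⊗ₜ[k] 1 * comul L = 1 ⊗ₜ T h * comul L := by
    intro h
    rw [← sum_one_tmul_inv_antipode_mul_comul hST hTS (ℛ k h), Finset.sum_mul]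
    simp only [mul_assoc, ← Bialgebra.comul_mul, hL _, map_smul, mul_smul_comm, ← smul_mul_assoc]
    rw [← Finset.sum_mul]
    congr 1
    have hh : ∑ i ∈ (ℛ k h).index, counit (R := k) ((ℛ k h).left i) • (ℛ k h).right i = h :=
      sum_counit_smul _
    conv_rhs => rw [← hh]
    simp [TensorProduct.tmul_sum]
  refine isSemisimpleModule_iff _ _ |>.2 ⟨fun N => ?_⟩
  obtain ⟨p, hp⟩ := (N.restrictScalars k).subtype.exists_leftInverse_of_injective
    (Submodule.ker_subtype _)
  have hpN : ∀ x (hx : x ∈ N), p x = ⟨x, hx⟩ := fun x hx => LinearMap.congr_fun hp ⟨x, hx⟩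
  let B : H → H ⊗[k] H →ₗ[k] H := fun x => LinearMap.mul' k H ∘ₗ
    TensorProduct.map LinearMap.id
      ((N.restrictScalars k).subtype ∘ₗ p ∘ₗ LinearMap.mulRight k x ∘ₗ antipode k)
  have hB : ∀ x a b, B x (a ⊗ₜ b) = a * p (antipode k b * x) := fun x a b => by simp [B]
  have hB₁ : ∀ x h z, B x (h ⊗ₜ 1 * z) = h * B x z := by
    intro x h z
    induction z with
    | zero => simp
    | tmul a b => simp [hB, mul_assoc]
    | add a b ha hb => simp [mul_add, ha, hb]
  have hB₂ : ∀ x h z, B x (1 ⊗ₜ T h * z) = B (h * x) z := by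
    intro x h z
    induction z with
    | zero => simp
    | tmul a b => simp [hB, mul_assoc, antipode_mul_antidistrib, hST]
    | add a b ha hb => simp [mul_add, ha, hb]
  have hBmem : ∀ x z, B x z ∈ N := by
    intro x z
    induction z with
    | zero => simp
    | tmul a b => rw [hB]; exact N.smul_mem a (p _).2
    | add a b ha hb => rw [map_add]; exact N.add_mem ha hb
  have hBadd : ∀ x y z, B (x + y) z = B x z + B y z := by
    intro x y z
    induction z with
    | zero => simp
    | tmul a b => simp [hB, mul_add]
    | add a b ha hb => rw [map_add, map_add, map_add, ha, hb]; abel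
  have hBN : ∀ x ∈ N, B x (comul L) = counit (R := k) L • x := by
    intro x hx
    rw [← (ℛ k L).eq, map_sum]
    have : ∀ i, p (antipode k ((ℛ k L).right i) * x) =
        ⟨antipode k ((ℛ k L).right i) * x, N.smul_mem _ hx⟩ := fun i => hpN _ _
    simp only [hB, this, ← mul_assoc, ← Finset.sum_mul, sum_mul_antipode_eq_smul, smul_mul_assoc,
      one_mul]
  let P : H →ₗ[H] N :=
    { toFun := fun x => ⟨(counit (R := k) L)⁻¹ • B x (comul L),
        (N.restrictScalars k).smul_mem _ (hBmem _ _)⟩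
      map_add' := fun x y => Subtype.ext (by simp [hBadd])
      map_smul' := fun h x => Subtype.ext (by simp [← hB₂, ← hcas, hB₁]) }
  exact ⟨_, LinearMap.isCompl_of_proj (f := P) fun x => Subtype.ext (by
    change (counit (R := k) L)⁻¹ • B x (comul L) = x
    rw [hBN x x.2, smul_smul, inv_mul_cancel₀ hεL, one_smul])⟩

end Integrals

section JointEigenspaces

variable {n : ℕ}

lemma pow_val_natCast {M : Type*} [Monoid M] {f : M} (hf : f ^ n = 1) (m : ℕ) :
    f ^ (m : ZMod n).val = f ^ m := by
  rw [ZMod.val_natCast, ← pow_eq_pow_mod m hf]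

lemma pow_mul_pow_eq_sq_pow_mul {M : Type*} [Monoid M] {σ : M} (hσ : σ ^ (2 * n) = 1) {m : ℕ}
    (hm : n = 2 * m + 1) (t : ℕ) :
    σ ^ n * (σ ^ (n + 1)) ^ (2 * t + 2 * m) = (σ ^ 2) ^ t * σ ^ (4 * n - 1) := by
  have hexp : n + (n + 1) * (2 * t + 2 * m) + 2 * n =
      2 * t + (4 * n - 1) + 2 * n * (t + m) := by
    have : 4 * n - 1 = 8 * m + 3 := by omega
    rw [this, hm]
    ring
  rw [← pow_mul σ, ← pow_mul σ, ← pow_add, ← pow_add,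
    ← mul_one (σ ^ (n + (n + 1) * (2 * t + 2 * m))), ← hσ, ← pow_add, hexp,
    pow_add, pow_mul _ (2 * n), hσ, one_pow, mul_one]

variable [NeZero n] {k V : Type*} [Field k] [AddCommGroup V] [Module k V]

/-- The spectral projection of an endomorphism `f` with `fⁿ = 1` onto its `χ(i)`-eigenspace, where
`χ` is a primitive character of `ℤ/n`. -/
noncomputable def spectralProj (χ : AddChar (ZMod n) k) (f : Module.End k V) (i : ZMod n) :
    Module.End k V :=
  (n : k)⁻¹ • ∑ s : ZMod n, χ (-(i * s)) • f ^ s.val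

lemma mul_spectralProj (χ : AddChar (ZMod n) k) {f : Module.End k V} (hf : f ^ n = 1)
    (i : ZMod n) : f * spectralProj χ f i = χ i • spectralProj χ f i := by
  rw [spectralProj, mul_smul_comm, smul_comm (χ i)]
  congr 1
  rw [Finset.mul_sum, Finset.smul_sum]
  refine Fintype.sum_equiv (Equiv.addRight (1 : ZMod n)) _ _ fun s => ?_
  have hs : f ^ (s + 1).val = f * f ^ s.val := by
    rw [← pow_succ', ← pow_val_natCast hf (s.val + 1)]
    simp
  rw [Equiv.coe_addRight, hs, mul_smul_comm, smul_smul, ← AddChar.map_add_eq_mul]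
  congr 2
  ring

lemma spectralProj_apply_of_apply_eq_smul [CharZero k] (χ : AddChar (ZMod n) k)
    {f : Module.End k V} {i : ZMod n} {v : V} (hv : f v = χ i • v) :
    spectralProj χ f i v = v := by
  have hpow : ∀ m : ℕ, (f ^ m) v = χ (i * m) • v := by
    intro m
    induction m with
    | zero => simp
    | succ m ih =>
      rw [pow_succ', Module.End.mul_apply, ih, map_smul, hv, smul_smul, ← AddChar.map_add_eq_mul]
      push_cast
      rw [mul_add, mul_one]
  have hterm : ∀ s : ZMod n, χ (-(i * s)) • (f ^ s.val) v = v := by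
    intro s
    rw [hpow, ZMod.natCast_zmod_val, smul_smul, ← AddChar.map_add_eq_mul, neg_add_cancel,
      AddChar.map_zero_eq_one, one_smul]
  simp only [spectralProj, LinearMap.smul_apply, LinearMap.sum_apply, hterm, Finset.sum_const,
    Finset.card_univ, ZMod.card, ← Nat.cast_smul_eq_nsmul k, smul_smul]
  rw [inv_mul_cancel₀ (NeZero.ne _), one_smul]

lemma Commute.spectralProj_right (χ : AddChar (ZMod n) k) {f h : Module.End k V}
    (hc : Commute h f) (i : ZMod n) : Commute h (spectralProj χ f i) :=
  (Commute.sum_right _ _ _ fun _ _ => (hc.pow_right _).smul_right _).smul_right _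

/-- The spectral projection onto the joint eigenspace of `σ` and `R` for the eigenvalues
`(-1)^a χ(i)` and `χ(j)`, where `σ²ⁿ = 1` and `Rⁿ = 1` with `n` odd. -/
noncomputable def jointProj (χ : AddChar (ZMod n) k) (σ R : Module.End k V)
    (a : ZMod 2) (i j : ZMod n) : Module.End k V :=
  ((2 : k)⁻¹ • (1 + (-1 : k) ^ a.val • σ ^ n)) *
    (spectralProj χ (σ ^ (n + 1)) i * spectralProj χ R j)

lemma isProj_jointProj [CharZero k] (hn : Odd n) (χ : AddChar (ZMod n) k) {σ R : Module.End k V}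
    (hσ : σ ^ (2 * n) = 1) (hR : R ^ n = 1) (hc : Commute σ R) (a : ZMod 2) (i j : ZMod n) :
    LinearMap.IsProj (Module.End.eigenspace σ ((-1 : k) ^ a.val * χ i) ⊓
      Module.End.eigenspace R (χ j)) (jointProj χ σ R a i j) := by
  have hsq : (-1 : k) ^ a.val * (-1 : k) ^ a.val = 1 := by rw [← mul_pow]; simp
  have hρ : (σ ^ (n + 1)) ^ n = 1 := by
    obtain ⟨m, hm⟩ := hn.add_one
    rw [← pow_mul, show (n + 1) * n = 2 * n * m by rw [hm]; ring, pow_mul, hσ, one_pow]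
  have hσ' : σ = σ ^ n * σ ^ (n + 1) := by
    rw [← pow_add, show n + (n + 1) = 2 * n + 1 by ring, pow_succ, hσ, one_mul]
  have hτ : σ ^ n * ((2 : k)⁻¹ • (1 + (-1 : k) ^ a.val • σ ^ n)) =
      (-1 : k) ^ a.val • ((2 : k)⁻¹ • (1 + (-1 : k) ^ a.val • σ ^ n)) := by
    rw [mul_smul_comm, mul_add, mul_one, mul_smul_comm, ← pow_add, ← two_mul, hσ,
      smul_comm ((-1 : k) ^ a.val) (2 : k)⁻¹]
    congr 1
    rw [smul_add, smul_smul, hsq, one_smul, add_comm]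
  have hσQ : σ * jointProj χ σ R a i j = ((-1 : k) ^ a.val * χ i) • jointProj χ σ R a i j := by
    have hcomm : Commute (σ ^ (n + 1)) ((2 : k)⁻¹ • (1 + (-1 : k) ^ a.val • σ ^ n)) :=
      ((Commute.one_right _).add_right
        (((Commute.refl σ).pow_pow _ _).smul_right _)).smul_right _
    have hfactor : σ * jointProj χ σ R a i j = σ ^ n * (σ ^ (n + 1) * jointProj χ σ R a i j) := by
      rw [← mul_assoc, ← hσ']
    rw [hfactor, jointProj, ← mul_assoc (σ ^ (n + 1)), hcomm.eq, mul_assoc, ← mul_assoc (σ ^ n),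
      hτ, ← mul_assoc (σ ^ (n + 1)), mul_spectralProj χ hρ,
      smul_mul_assoc (χ i), mul_smul_comm (χ i), smul_mul_assoc ((-1 : k) ^ a.val), smul_comm,
      smul_smul]
  have hRQ : R * jointProj χ σ R a i j = χ j • jointProj χ σ R a i j := by
    have hcomm : Commute R ((2 : k)⁻¹ • (1 + (-1 : k) ^ a.val • σ ^ n)) :=
      ((Commute.one_right _).add_right ((hc.symm.pow_right _).smul_right _)).smul_right _
    have hcomm' : Commute R (spectralProj χ (σ ^ (n + 1)) i) :=
      (hc.symm.pow_right _).spectralProj_right χ i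
    rw [jointProj, ← mul_assoc, hcomm.eq, mul_assoc, ← mul_assoc R, hcomm'.eq, mul_assoc,
      mul_spectralProj χ hR, mul_smul_comm, mul_smul_comm]
  refine ⟨fun v => ?_, fun v hv => ?_⟩
  · rw [Submodule.mem_inf, Module.End.mem_eigenspace_iff, Module.End.mem_eigenspace_iff]
    exact ⟨LinearMap.congr_fun hσQ v, LinearMap.congr_fun hRQ v⟩
  · rw [Submodule.mem_inf, Module.End.mem_eigenspace_iff, Module.End.mem_eigenspace_iff] at hv
    obtain ⟨hv₁, hv₂⟩ := hv
    have hpow : ∀ m : ℕ, (σ ^ m) v = ((-1 : k) ^ a.val * χ i) ^ m • v := by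
      intro m
      induction m with
      | zero => simp
      | succ m ih => rw [pow_succ', Module.End.mul_apply, ih, map_smul, hv₁, smul_smul, pow_succ]
    have hχ : χ i ^ n = 1 := by
      rw [← AddChar.map_nsmul_eq_pow]
      simp
    have hv₃ : (σ ^ n) v = (-1 : k) ^ a.val • v := by
      rw [hpow, mul_pow, hχ, mul_one, ← pow_mul, mul_comm, pow_mul, hn.neg_one_pow]
    have hv₄ : (σ ^ (n + 1)) v = χ i • v := by
      rw [hpow, mul_pow, pow_succ (χ i), hχ, one_mul, ← pow_mul, mul_comm a.val, pow_mul,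
        hn.add_one.neg_one_pow, one_pow, one_mul]
    rw [jointProj, Module.End.mul_apply, Module.End.mul_apply,
      spectralProj_apply_of_apply_eq_smul χ hv₂, spectralProj_apply_of_apply_eq_smul χ hv₄]
    simp only [LinearMap.smul_apply, LinearMap.add_apply, Module.End.one_apply, hv₃, smul_smul, hsq,
      one_smul, ← two_smul k v]
    rw [inv_mul_cancel₀ two_ne_zero, one_smul]

lemma trace_jointProj (χ : AddChar (ZMod n) k) (σ R : Module.End k V)
    (a : ZMod 2) (i j : ZMod n) :
    LinearMap.trace k V (jointProj χ σ R a i j) =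
      ∑ s : ZMod n, ∑ t : ZMod n, (2 : k)⁻¹ * ((n : k)⁻¹ * (n : k)⁻¹) *
        (χ (-(i * s)) * χ (-(j * t))) *
        (LinearMap.trace k V ((σ ^ (n + 1)) ^ s.val * R ^ t.val) +
          (-1 : k) ^ a.val * LinearMap.trace k V (σ ^ n * (σ ^ (n + 1)) ^ s.val * R ^ t.val)) := by
  simp only [jointProj, spectralProj, smul_mul_assoc, mul_smul_comm, Finset.sum_mul,
    Finset.mul_sum, add_mul, one_mul, map_smul, map_sum, map_add, smul_eq_mul, mul_assoc,
    Finset.smul_sum]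
  rw [Finset.sum_comm]
  refine Finset.sum_congr rfl fun s _ => Finset.sum_congr rfl fun t _ => ?_
  ring

/-- If the traces of the operators `σ^(2t-1) R^t` vanish, then so do the corresponding alternating
sums of dimensions of joint eigenspaces. -/
lemma sum_finrank_jointEigenspace_eq_zero [CharZero k] [FiniteDimensional k V] (hn : Odd n)
    {χ : AddChar (ZMod n) k} (hχ : χ.IsPrimitive) {σ R : Module.End k V}
    (hσ : σ ^ (2 * n) = 1) (hR : R ^ n = 1) (hc : Commute σ R)
    (htr : ∀ t : ZMod n,
      LinearMap.trace k V (σ ^ n * (σ ^ (n + 1)) ^ (2 * t - 1).val * R ^ t.val) = 0)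
    (l : ZMod n) :
    ∑ t : ZMod 2 × ZMod n, (-1 : k) ^ t.1.val * χ (-t.2) *
      (Module.finrank k ↥(Module.End.eigenspace σ ((-1 : k) ^ t.1.val * χ t.2) ⊓
        Module.End.eigenspace R (χ (l - 2 * t.2))) : k) = 0 := by
  simp only [← (isProj_jointProj hn χ hσ hR hc _ _ _).trace, trace_jointProj]
  have hterm : ∀ i : ZMod n, ∑ a : ZMod 2, (-1 : k) ^ a.val * χ (-i) *
      ∑ s : ZMod n, ∑ t : ZMod n, (2 : k)⁻¹ * ((n : k)⁻¹ * (n : k)⁻¹) *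
        (χ (-(i * s)) * χ (-((l - 2 * i) * t))) *
        (LinearMap.trace k V ((σ ^ (n + 1)) ^ s.val * R ^ t.val) +
          (-1 : k) ^ a.val * LinearMap.trace k V (σ ^ n * (σ ^ (n + 1)) ^ s.val * R ^ t.val)) =
      ∑ s : ZMod n, ∑ t : ZMod n, (n : k)⁻¹ * (n : k)⁻¹ * χ (-(l * t)) *
        LinearMap.trace k V (σ ^ n * (σ ^ (n + 1)) ^ s.val * R ^ t.val) *
          χ (i * (2 * t - 1 - s)) := by
    intro i
    simp only [Finset.mul_sum]
    rw [Finset.sum_comm]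
    refine Finset.sum_congr rfl fun s _ => ?_
    rw [Finset.sum_comm]
    refine Finset.sum_congr rfl fun t _ => ?_
    have hexp : χ (-(l * t)) * χ (i * (2 * t - 1 - s)) =
        χ (-i) * (χ (-(i * s)) * χ (-((l - 2 * i) * t))) := by
      simp only [← AddChar.map_add_eq_mul]
      congr 1
      ring
    rw [mul_right_comm _ _ (χ (i * (2 * t - 1 - s))), mul_assoc _ (χ _) (χ _), hexp,
      show (Finset.univ : Finset (ZMod 2)) = {0, 1} from rfl, Finset.sum_pair (by decide),
      ZMod.val_zero, ZMod.val_one]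
    ring
  rw [Fintype.sum_prod_type_right, Finset.sum_congr rfl fun i _ => hterm i, Finset.sum_comm]
  refine Finset.sum_eq_zero fun s _ => ?_
  rw [Finset.sum_comm]
  refine Finset.sum_eq_zero fun t _ => ?_
  rw [← Finset.mul_sum, AddChar.sum_mulShift _ hχ]
  split_ifs with h
  · rw [← sub_eq_zero.1 h, htr, mul_zero, zero_mul]
  · simp

end JointEigenspaces

/-- Lemma 4.4. Let `H` be a non-semisimple unimodular Hopf algebra of odd
index `n` over an algebraically closed field of characteristic `0` and `ω` a primitive `n`-th
root of unity. Then for every `l ∈ ℤ/n`,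
`Σ_{(a,i) ∈ ℤ/2 × ℤ/n} (−1)^a ω^{−i} dim H^ω_{a,i,l−2i} = 0` in `k`,
the index `l − 2i` being computed in `ℤ/n`. -/
theorem stmt14 (k : Type*) [Field k] [IsAlgClosed k] [CharZero k]
    (n : ℕ) (hn : Odd n) [NeZero n]
    (H : Type*) [Ring H] [HopfAlgebra k H] [FiniteDimensional k H]
    (hss : ¬ IsSemisimpleRing H)
    (huni : IsDistinguishedGroupLikeDual k (Bialgebra.counitAlgHom k H))
    (g : H) (hg : IsDistinguishedGroupLike k g) (hidx : IsHopfIndex k g n)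
    (ω : k) (hω : IsPrimitiveRoot ω n) :
    ∀ l : ZMod n,
      ∑ t : ZMod 2 × ZMod n,
        (-1 : k) ^ t.1.val * (ω ^ t.2.val)⁻¹ *
          (Module.finrank k (hopfEigenspace g ω (t.1, t.2, l - 2 * t.2)) : k) = 0 := by
  classical
  intro l
  obtain ⟨⟨hg0, hgΔ⟩, lam, hlam0, hlam, hlamg⟩ := hg
  obtain ⟨L, hL0, hL, hL'⟩ := huni
  obtain ⟨-, hS, hgn, -⟩ := hidx
  have hgl : IsGroupLikeElem k g := by
    refine ⟨?_, hgΔ⟩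
    have h := congr(contractFst counit $hgΔ)
    have hc : contractFst counit (comul (R := k) g) = g := by simp [contractFst]
    rw [hc, contractFst_tmul] at h
    exact smul_left_injective k hg0 (by simpa using h.symm)
  obtain ⟨m, hm⟩ := hn
  let S : Module.End k H := antipode k
  let T : Module.End k H := S ^ (4 * n - 1)
  have h4n : 4 * n = 4 * n - 1 + 1 := by omega
  have hST : ∀ x, antipode k (T x) = x := fun x => by
    have h : S * T = 1 := by rw [← pow_succ', ← h4n]; exact hS
    exact LinearMap.congr_fun h x
  have hTS : ∀ x, T (antipode k x) = x := fun x => by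
    have h : T * S = 1 := by rw [← pow_succ, ← h4n]; exact hS
    exact LinearMap.congr_fun h x
  have hlL := dual_integral_apply_integral_ne_zero hST hTS hlam0 hlam hL0 hL
  have hεL : counit (R := k) L = 0 := by
    by_contra h
    exact hss (isSemisimpleRing_of_counit_integral_ne_zero hST hTS hL h)
  let R : Module.End k H := LinearMap.mulRight k g
  have hRpow : ∀ (t : ℕ) (x : H), (R ^ t) x = x * g ^ t := fun t x => by
    rw [LinearMap.pow_mulRight, LinearMap.mulRight_apply]
  have hσ : (S ^ 2) ^ (2 * n) = 1 := by
    rw [← pow_mul, show 2 * (2 * n) = 4 * n by ring]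
    exact hS
  have hR : R ^ n = 1 := by
    ext x
    rw [hRpow, hgn, mul_one, Module.End.one_apply]
  have hmul : ∀ x y : H, (S ^ 2) (x * y) = (S ^ 2) x * (S ^ 2) y := fun x y => by
    simp [S, pow_two, antipode_mul_antidistrib]
  have hSg : (S ^ 2) g = g := by simp [S, pow_two, hgl]
  have hc : Commute (S ^ 2) R := by
    ext x
    change (S ^ 2) (x * g) = (S ^ 2) x * g
    rw [hmul, hSg]
  have hS4 : ∀ (t : ℕ) (x : H), (((S ^ 2) ^ 2) ^ t) x * g ^ t = g ^ t * x := by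
    intro t
    induction t with
    | zero => simp
    | succ t ih =>
      intro x
      rw [pow_succ', Module.End.mul_apply, pow_succ' g, ← mul_assoc, ← pow_mul,
        antipode_pow_four_mul hST hTS hgl hlam hlamg hlL hL hL', mul_assoc, pow_mul, ih, mul_assoc]
  have htr : ∀ t : ZMod n, LinearMap.trace k H
      ((S ^ 2) ^ n * ((S ^ 2) ^ (n + 1)) ^ (2 * t - 1).val * R ^ t.val) = 0 := by
    intro t
    rw [← trace_mulLeft_comp_inv_antipode_sq hST hTS hlam hlL hL hεL (g ^ t.val)]
    congr 1
    have hρ : ((S ^ 2) ^ (n + 1)) ^ n = 1 := by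
      rw [← pow_mul, show (n + 1) * n = 2 * n * (m + 1) by rw [hm]; ring, pow_mul, hσ, one_pow]
    have hcast : ((2 * t.val + 2 * m : ℕ) : ZMod n) = 2 * t - 1 := by
      have h0 : ((2 * m + 1 : ℕ) : ZMod n) = 0 := by rw [← hm]; exact ZMod.natCast_self n
      push_cast at h0 ⊢
      rw [ZMod.natCast_zmod_val]
      linear_combination h0
    have hTT : T * T = (S ^ 2) ^ (4 * n - 1) := by
      rw [← pow_add, ← pow_mul]
      congr 1
      omega
    have hTR : Commute (((S ^ 2) ^ 2) ^ t.val * (T * T)) (R ^ t.val) := by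
      rw [hTT]
      exact ((hc.pow_left 2).pow_pow _ _).mul_left (hc.pow_pow _ _)
    rw [← hcast, pow_val_natCast hρ, pow_mul_pow_eq_sq_pow_mul hσ hm, ← hTT, hTR.eq]
    ext x
    rw [Module.End.mul_apply, hRpow]
    exact hS4 t.val (T (T x))
  have hχ := AddChar.zmodChar_primitive_of_primitive_root n hω
  have main := sum_finrank_jointEigenspace_eq_zero ⟨m, hm⟩ hχ hσ hR hc htr l
  simp only [AddChar.map_neg_eq_inv, AddChar.zmodChar_apply] at main
  exact main
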